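/- There exists a constant C' > 0, depending only on r and s, such that the following holds for every sufficiently large prime q. Let F, the partitions S_1(y),…,S_r(y), and H be as in the context, with H good. Then there is a collection 𝒞 of at most q^{C'·q^{2−1/(s−1)}(log₂ q)²} subsets of X, each of size at most 500 s² q², such that for every set I ⊆ X for which H[I] contains no subgraph isomorphic to K_{s_1,…,s_r}, there is some R ∈ 𝒞 with I ⊆ R. -/

import Mathlib

/-!
The proof is a container argument adapted to unions of complete multipartite blocks.

If `H[I]` contains no `K_{s_1,…,s_r}`, then for every `y` the set `I` has fewer than `s_i` points
in some part `S_i(y)`; this is the only property of `I` that is used. Fix a set `U` larger than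
`500 s² q²`. Goodness supplies about `|U| q / (γ log q)` vertices `y` whose parts in `U` all have
size of order `γ ≥ |U| / q²`. These form a linear system of blocks: each point lies in at most
`q + 1` of them, and two blocks share at most one point because `F` is `C₄`-free.

The algorithm runs in `s - 1` stages, each lowering one of the requirements `s_i` by one
(`covered_stage`). Within a stage, consider the points lying in the chosen part of many blocks
not yet treated. If `I` avoids all of them, deleting them from `U` gives a container. Otherwise
one point of `I` among them is recorded by branching, and the blocks through it pass to the next
stage with that point removed and one requirement less. Points whose degree in the new system has
reached the prescribed bound are called saturated and are deleted from blocks passed on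
later; double counting shows that this spoils few blocks. By linearity one step raises the degree
of any other point by at most one. Each stage shrinks the degree bound by `ρ = q^{-1/(s-1)}` and
the number of blocks by a constant times `ρ`, and records `O(ρ q²)` points
(`covered_of_blockSystem`). After the last stage a single point is forbidden from the chosen part
of every remaining block, and since the degrees are bounded these parts have a large union. In all
cases the container loses a fraction `κ / log q` of `U` (`covered_shrink`).

Repeating this `O((log q)²)` times brings every container from `X` down to size `500 s² q²`
(`covered_iterate`). Every recorded point contributes a factor at most `|X| + 1 ≤ q⁴` to the number
of containers, which gives the bound.
-/

/-- `G` contains a copy of `F` as a (not necessarily induced) subgraph, i.e. there is an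
injective graph homomorphism from `F` to `G`. -/
def ContainsCopy {α β : Type*} (F : SimpleGraph α) (G : SimpleGraph β) : Prop :=
  ∃ f : α → β, Function.Injective f ∧ ∀ ⦃a b : α⦄, F.Adj a b → G.Adj (f a) (f b)

/-- The `F`-independence number of a finite graph `G`: the maximum size of a set `S` of
vertices such that the induced subgraph `G[S]` contains no copy of `F`. -/
noncomputable def fIndepNum {α β : Type*} [Fintype β] (F : SimpleGraph α) (G : SimpleGraph β) :
    ℕ :=
  sSup {k | ∃ S : Finset β, S.card = k ∧ ¬ ContainsCopy F (G.induce (S : Set β))}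

/-- `f_{F,H}(n)`: the minimum of the `F`-independence number over all `H`-free graphs on
`n` vertices. -/
noncomputable def minFIndep {α γ : Type*} (F : SimpleGraph α) (H : SimpleGraph γ) (n : ℕ) : ℕ :=
  sInf {k | ∃ G : SimpleGraph (Fin n), ¬ ContainsCopy H G ∧ fIndepNum F G = k}

/-- The Turán number `ex(n, F)`: the maximum number of edges of an `F`-free graph on `n`
vertices. -/
noncomputable def turanNum (n : ℕ) {α : Type*} (F : SimpleGraph α) : ℕ :=
  sSup {k | ∃ G : SimpleGraph (Fin n), ¬ ContainsCopy F G ∧ k = Nat.card G.edgeSet}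

/-! ### Families of containers -/

/-- The sets `I` with `P I` can be covered by at most `M ^ n` sets of size at most `m`. -/
def Covered {X : Type*} (M n : ℕ) (m : ℝ) (P : Finset X → Prop) : Prop :=
  ∃ 𝒞 : Finset (Finset X), 𝒞.card ≤ M ^ n ∧ (∀ R ∈ 𝒞, (R.card : ℝ) ≤ m) ∧
    ∀ I, P I → ∃ R ∈ 𝒞, I ⊆ R

theorem Covered.mono {X : Type*} {M n n' : ℕ} {m m' : ℝ} {P P' : Finset X → Prop}
    (h : Covered M n m P) (hM : 0 < M) (hn : n ≤ n') (hm : m ≤ m') (hP : ∀ I, P' I → P I) :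
    Covered M n' m' P' := by
  obtain ⟨C, h1, h2, h3⟩ := h
  exact ⟨C, h1.trans (Nat.pow_le_pow_right hM hn), fun R hR => (h2 R hR).trans hm,
    fun I hI => h3 I (hP I hI)⟩

/-- Branching step of the container algorithm: a set `I ⊆ U` either avoids `V`, and then
`U \ V` is a container for it, or it contains some `v ∈ V`, which is then recorded. -/
theorem Covered.branch {X : Type*} [DecidableEq X] {M n : ℕ} {m : ℝ} {P : Finset X → Prop}
    (U V : Finset X) (hPU : ∀ I, P I → I ⊆ U) (hM : V.card + 1 ≤ M)
    (hm : ((U \ V).card : ℝ) ≤ m) (hV : ∀ v ∈ V, Covered M n m (fun I => P I ∧ v ∈ I)) :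
    Covered M (n + 1) m P := by
  choose! C h1 h2 h3 using hV
  refine ⟨insert (U \ V) (V.biUnion C), ?_, ?_, ?_⟩
  · have hb : (V.biUnion C).card ≤ V.card * M ^ n := Finset.card_biUnion_le_card_mul _ _ _ h1
    have h0 : 1 ≤ M ^ n := Nat.one_le_pow _ _ (by omega)
    calc _ ≤ (V.biUnion C).card + 1 := Finset.card_insert_le _ _
      _ ≤ V.card * M ^ n + M ^ n := by omega
      _ = M ^ n * (V.card + 1) := by ring
      _ ≤ M ^ n * M := Nat.mul_le_mul_left _ hM
      _ = M ^ (n + 1) := by ring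
  · intro R hR
    rcases Finset.mem_insert.1 hR with rfl | hR
    · exact hm
    · obtain ⟨v, hv, hR⟩ := Finset.mem_biUnion.1 hR
      exact h2 v hv R hR
  · intro I hI
    by_cases h : ∃ v ∈ V, v ∈ I
    · obtain ⟨v, hv, hvI⟩ := h
      obtain ⟨R, hR, hIR⟩ := h3 v hv I ⟨hI, hvI⟩
      exact ⟨R, Finset.mem_insert_of_mem (Finset.mem_biUnion.2 ⟨v, hv, hR⟩), hIR⟩
    · push Not at h
      exact ⟨_, Finset.mem_insert_self _ _, fun x hx =>
        Finset.mem_sdiff.2 ⟨hPU I hI hx, fun hxV => h x hxV hx⟩⟩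

/-- Refining every container of a first cover by a second cover multiplies the counts. -/
theorem Covered.comp {X : Type*} [DecidableEq X] {M n₁ n₂ : ℕ} {m₁ m₂ : ℝ}
    {P : Finset X → Prop} (h : Covered M n₁ m₁ P)
    (h' : ∀ R : Finset X, (R.card : ℝ) ≤ m₁ → Covered M n₂ m₂ (fun I => P I ∧ I ⊆ R)) :
    Covered M (n₁ + n₂) m₂ P := by
  obtain ⟨C, h1, h2, h3⟩ := h
  choose! D k1 k2 k3 using h'
  refine ⟨C.biUnion D, ?_, ?_, ?_⟩
  · have hb := Finset.card_biUnion_le_card_mul C D (M ^ n₂) fun R hR => k1 R (h2 R hR)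
    rw [pow_add]
    exact hb.trans (Nat.mul_le_mul_right _ h1)
  · intro R hR
    obtain ⟨S, hS, hR⟩ := Finset.mem_biUnion.1 hR
    exact k2 S (h2 S hS) R hR
  · intro I hI
    obtain ⟨S, hS, hIS⟩ := h3 I hI
    obtain ⟨R, hR, hIR⟩ := k3 S (h2 S hS) I ⟨hI, hIS⟩
    exact ⟨R, Finset.mem_biUnion.2 ⟨S, hS, hR⟩, hIR⟩

/-! ### Block systems -/

theorem card_mul_le_sum_card_filter {α β : Type*} (S : Finset α) (T : Finset β)
    (R : α → β → Prop) [∀ a b, Decidable (R a b)] (l : ℝ) (hl : ∀ a ∈ S, l ≤ ((T.filter (R a)).card : ℝ)) :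
    S.card * l ≤ ∑ b ∈ T, ((S.filter (R · b)).card : ℝ) := by
  have h := Finset.sum_card_bipartiteAbove_eq_sum_card_bipartiteBelow (s := S) (t := T) R
  have h2 : ∑ b ∈ T, ((S.filter (R · b)).card : ℝ) = ∑ a ∈ S, ((T.filter (R a)).card : ℝ) := by
    exact_mod_cast h.symm
  rw [h2, ← nsmul_eq_mul]
  exact Finset.card_nsmul_le_sum _ _ _ hl

theorem card_mul_le_card_mul_real {α β : Type*} (S : Finset α) (T : Finset β)
    (R : α → β → Prop) [∀ a b, Decidable (R a b)] (l u : ℝ) (hl : ∀ a ∈ S, l ≤ ((T.filter (R a)).card : ℝ))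
    (hu : ∀ b ∈ T, ((S.filter (R · b)).card : ℝ) ≤ u) : S.card * l ≤ T.card * u := by
  refine (card_mul_le_sum_card_filter S T R l hl).trans ?_
  rw [← nsmul_eq_mul]
  exact Finset.sum_le_card_nsmul _ _ _ hu

open Classical in
/-- A linear system of blocks in `U`: each `y ∈ Z` carries a block `⋃ i, Q y i ⊆ U` whose
parts have sizes in `[a, b]`, every point lies in at most `D` blocks, and two distinct blocks
share at most one point. -/
structure IsBlockSystem {X Y ι : Type*} [Fintype ι] (U : Finset X) (b a D : ℝ) (Z : Finset Y)
    (Q : Y → ι → Finset X) : Prop where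
  sub : ∀ y ∈ Z, ∀ i, Q y i ⊆ U
  upper : ∀ y ∈ Z, ∀ i, ((Q y i).card : ℝ) ≤ b
  lower : ∀ y ∈ Z, ∀ i, a ≤ ((Q y i).card : ℝ)
  deg : ∀ w, ((Z.filter (fun y => ∃ i, w ∈ Q y i)).card : ℝ) ≤ D
  linear : ∀ y ∈ Z, ∀ y₂ ∈ Z, ∀ v w, v ≠ w → (∃ i, v ∈ Q y i) → (∃ i, w ∈ Q y i) →
    (∃ i, v ∈ Q y₂ i) → (∃ i, w ∈ Q y₂ i) → y = y₂

/-- `I ⊆ U` contains, for no `y ∈ Z`, at least `t i` points of each part `Q y i`. -/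
def Avoids {X Y ι : Type*} [DecidableEq X] (U : Finset X) (Z : Finset Y)
    (Q : Y → ι → Finset X) (t : ι → ℕ) (I : Finset X) : Prop :=
  I ⊆ U ∧ ∀ y ∈ Z, ∃ i, (I ∩ Q y i).card < t i

/-! ### One stage of the container algorithm -/

open Classical in
/-- As long as fewer than `z'` blocks have been hit (those in `Z'`, kept with their reduced
parts `Q'`), many points `v` lie in the `j`-th part of at least `z a₀ / (8 |U|)` blocks of `Z`
that are neither hit nor spoiled. Here `Sat` is the set of points
which already have almost the maximal degree `D'` in the new system; a block is spoiled if one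
of its parts meets `Sat` in more than `e - 1` points. -/
theorem many_heavy_points {X Y ι : Type*} [Fintype ι] {U : Finset X} {b a a' D D' : ℝ}
    {Z Z' : Finset Y} {Q Q' : Y → ι → Finset X} {z z' e a₀ : ℝ}
    (hs : IsBlockSystem U b a D Z Q) (hs' : IsBlockSystem U b a' D' Z' Q')
    (hz : z ≤ Z.card) (hz0 : 0 < z) (hz' : z' ≤ z / 4) (hZ' : (Z'.card : ℝ) < z')
    (hD : 0 < D) (hD' : 2 ≤ D') (he : 2 ≤ e) (hb : 0 ≤ b)
    (hbad : 16 * (z' * D) * (Fintype.card ι * b) ≤ z * D' * e)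
    (ha : a₀ / 2 ≤ a) (ha0 : 0 < a₀) (hU : 0 < U.card) (j : ι)
    (Sat : Finset X) (hSat : Sat = U.filter
      (fun w => D' < ((Z'.filter (fun y => ∃ i, w ∈ Q' y i)).card : ℝ) + 1))
    (A : Finset Y) (hA : A = Z.filter
      (fun y => y ∉ Z' ∧ ∀ i, (((Q y i) ∩ Sat).card : ℝ) ≤ e - 1))
    (V : Finset X) (hV : V = U.filter
      (fun v => z * a₀ / (8 * U.card) ≤ ((A.filter (fun y => v ∈ Q y j)).card : ℝ))) :
    z * a₀ / (8 * D) ≤ V.card := by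
  -- double counting over `Z'`; `D' ≥ 2` gives degree at least `D' / 2` on `Sat`
  have h1 : Sat.card * (D' / 2) ≤ Z'.card * (Fintype.card ι * b) := by
    refine card_mul_le_card_mul_real Sat Z' (fun w y => ∃ i, w ∈ Q' y i) _ _ ?_ ?_
    · intro w hw
      rw [hSat, Finset.mem_filter] at hw
      linarith [hw.2]
    · intro y hy
      have : Sat.filter (fun w => ∃ i, w ∈ Q' y i) ⊆ Finset.univ.biUnion (Q' y) := by
        intro w hw
        simpa using (Finset.mem_filter.1 hw).2
      calc ((Sat.filter (fun w => ∃ i, w ∈ Q' y i)).card : ℝ)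
          ≤ ((Finset.univ.biUnion (Q' y)).card : ℝ) := by exact_mod_cast Finset.card_le_card this
        _ ≤ ∑ i, ((Q' y i).card : ℝ) := by exact_mod_cast Finset.card_biUnion_le
        _ ≤ Fintype.card ι * b := by
          have := Finset.sum_le_card_nsmul Finset.univ (fun i => ((Q' y i).card : ℝ)) b
            (fun i _ => hs'.upper y hy i)
          simpa using this
  set Bad := Z.filter (fun y => ∃ i, e - 1 < (((Q y i) ∩ Sat).card : ℝ)) with hBad
  have h2 : Bad.card * (e / 2) ≤ Sat.card * D := by
    refine card_mul_le_card_mul_real Bad Sat (fun y w => ∃ i, w ∈ Q y i) _ _ ?_ ?_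
    · intro y hy
      obtain ⟨i, hi⟩ := (Finset.mem_filter.1 hy).2
      have : Q y i ∩ Sat ⊆ Sat.filter (fun w => ∃ i, w ∈ Q y i) := by
        intro w hw
        rw [Finset.mem_inter] at hw
        exact Finset.mem_filter.2 ⟨hw.2, i, hw.1⟩
      have : ((Q y i ∩ Sat).card : ℝ) ≤ ((Sat.filter (fun w => ∃ i, w ∈ Q y i)).card : ℝ) := by
        exact_mod_cast Finset.card_le_card this
      linarith
    · intro w _
      refine le_trans ?_ (hs.deg w)
      exact_mod_cast Finset.card_le_card (Finset.filter_subset_filter _ (Finset.filter_subset _ _))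
  -- the hypothesis `hbad` makes the number of spoiled blocks at most `z / 4`
  have hBadz : (Bad.card : ℝ) ≤ z / 4 := by
    have hιb : 0 ≤ (Fintype.card ι : ℝ) * b := by positivity
    have h3 : Sat.card * D' ≤ 2 * (z' * (Fintype.card ι * b)) := by nlinarith
    have h4 : Bad.card * e * D' ≤ 2 * (Sat.card * D') * D := by nlinarith
    have h5 : Bad.card * e * D' ≤ 4 * (z' * (Fintype.card ι * b)) * D := by nlinarith
    have h6 : (Bad.card : ℝ) * (e * D') ≤ z / 4 * (e * D') := by nlinarith
    exact le_of_mul_le_mul_right h6 (by positivity)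
  have hAz : z / 2 ≤ A.card := by
    have : Z ⊆ A ∪ (Z' ∪ Bad) := by
      intro y hy
      simp only [hA, hBad, Finset.mem_union, Finset.mem_filter]
      by_cases h : y ∈ Z'
      · exact Or.inr (Or.inl h)
      · by_cases h' : ∀ i, (((Q y i) ∩ Sat).card : ℝ) ≤ e - 1
        · exact Or.inl ⟨hy, h, h'⟩
        · push Not at h'
          exact Or.inr (Or.inr ⟨hy, h'⟩)
    have h7 : Z.card ≤ A.card + (Z'.card + Bad.card) :=
      (Finset.card_le_card this).trans ((Finset.card_union_le _ _).trans
        (Nat.add_le_add_left (Finset.card_union_le _ _) _))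
    have h8 : (Z.card : ℝ) ≤ A.card + (Z'.card + Bad.card) := by exact_mod_cast h7
    linarith
  have hAZ : A ⊆ Z := by rw [hA]; exact Finset.filter_subset _ _
  have hsum := card_mul_le_sum_card_filter A U (fun y v => v ∈ Q y j) (a₀ / 2) (by
    intro y hy
    have : U.filter (fun v => v ∈ Q y j) = Q y j := by
      ext v
      simp only [Finset.mem_filter, and_iff_right_iff_imp]
      exact fun h => hs.sub y (hAZ hy) j h
    rw [this]
    exact ha.trans (hs.lower y (hAZ hy) j))
  set θ := z * a₀ / (8 * U.card) with hθ
  have hU' : (0 : ℝ) < U.card := by exact_mod_cast hU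
  -- points outside `V` contribute less than `θ` each, points of `V` at most `D` each
  have hsum2 : ∑ v ∈ U, ((A.filter (fun y => v ∈ Q y j)).card : ℝ) ≤ V.card * D + U.card * θ := by
    rw [← Finset.sum_filter_add_sum_filter_not U
      (fun v => θ ≤ ((A.filter (fun y => v ∈ Q y j)).card : ℝ)), ← hV]
    refine add_le_add ?_ ?_
    · rw [← nsmul_eq_mul]
      refine Finset.sum_le_card_nsmul _ _ _ fun v _ => le_trans ?_ (hs.deg v)
      have : A.filter (fun y => v ∈ Q y j) ⊆ Z.filter (fun y => ∃ i, v ∈ Q y i) := by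
        intro y hy
        rw [Finset.mem_filter] at hy
        exact Finset.mem_filter.2 ⟨hAZ hy.1, j, hy.2⟩
      exact_mod_cast Finset.card_le_card this
    · have hθ0 : 0 ≤ θ := by positivity
      refine (Finset.sum_le_card_nsmul _ _ θ fun v hv => ?_).trans ?_
      · exact (not_le.1 (Finset.mem_filter.1 hv).2).le
      · rw [nsmul_eq_mul]
        gcongr
        exact Finset.filter_subset _ _
  have hUθ : U.card * θ = z * a₀ / 8 := by rw [hθ]; field_simp
  rw [div_le_iff₀ (by positivity)]
  have hAa : z / 2 * (a₀ / 2) ≤ A.card * (a₀ / 2) := by gcongr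
  linarith

open Classical in
/-- Recording a point `v` moves the blocks `A'` through `v` to the new system, after deleting
`v` and the saturated points from them. Two moved blocks already share `v`, so by linearity the
degree of every other point grows by at most one. -/
theorem IsBlockSystem.extend {X Y ι : Type*} [Fintype ι] {U : Finset X} {b a D D' e : ℝ}
    {Z Z' A' : Finset Y} {Q Q' : Y → ι → Finset X} {Sat : Finset X} {v : X} {j : ι}
    (hs : IsBlockSystem U b a D Z Q) (hs' : IsBlockSystem U b (a - e) D' Z' Q')
    (hZZ : Z' ⊆ Z) (hQQ : ∀ y ∈ Z', ∀ i, Q' y i ⊆ Q y i)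
    (hSat : Sat = U.filter
      (fun w => D' < ((Z'.filter (fun y => ∃ i, w ∈ Q' y i)).card : ℝ) + 1))
    (hA : A' ⊆ Z)
    (hAe : ∀ y ∈ A', ∀ i, (((Q y i) ∩ Sat).card : ℝ) ≤ e - 1) (hv : ∀ y ∈ A', v ∈ Q y j) :
    IsBlockSystem U b (a - e) D' (Z' ∪ A')
      (fun y => if y ∈ Z' then Q' y else fun i => (Q y i \ Sat).erase v) := by
  have hsub : ∀ y ∈ Z' ∪ A', ∀ i,
      (if y ∈ Z' then Q' y else fun i => (Q y i \ Sat).erase v) i ⊆ Q y i := by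
    intro y hy i
    split_ifs with h
    · exact hQQ y h i
    · exact (Finset.erase_subset _ _).trans Finset.sdiff_subset
  have hZA : Z' ∪ A' ⊆ Z := Finset.union_subset hZZ hA
  refine ⟨?_, ?_, ?_, ?_, ?_⟩
  · exact fun y hy i => (hsub y hy i).trans (hs.sub y (hZA hy) i)
  · intro y hy i
    refine le_trans ?_ (hs.upper y (hZA hy) i)
    exact_mod_cast Finset.card_le_card (hsub y hy i)
  · intro y hy i
    split_ifs with h
    · exact hs'.lower y h i
    · have hyA : y ∈ A' := (Finset.mem_union.1 hy).resolve_left h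
      have h1 := hs.lower y (hA hyA) i
      have h2 := hAe y hyA i
      have h3 : (Q y i).card ≤ ((Q y i \ Sat).erase v).card + 1 + (Q y i ∩ Sat).card := by
        have := Finset.card_sdiff_add_card_inter (Q y i) Sat
        have := Finset.pred_card_le_card_erase (s := Q y i \ Sat) (a := v)
        omega
      have h4 : ((Q y i).card : ℝ) ≤
          (((Q y i \ Sat).erase v).card : ℝ) + 1 + ((Q y i ∩ Sat).card : ℝ) := by
        exact_mod_cast h3
      linarith
  · intro w
    have hsplit : (Z' ∪ A').filter (fun y => ∃ i,
        w ∈ (if y ∈ Z' then Q' y else fun i => (Q y i \ Sat).erase v) i) ⊆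
        Z'.filter (fun y => ∃ i, w ∈ Q' y i) ∪
          A'.filter (fun y => ∃ i, w ∈ (Q y i \ Sat).erase v) := by
      intro y hy
      rw [Finset.mem_filter] at hy
      obtain ⟨hy, i, hi⟩ := hy
      rw [Finset.mem_union, Finset.mem_filter, Finset.mem_filter]
      by_cases h : y ∈ Z'
      · rw [if_pos h] at hi
        exact Or.inl ⟨h, i, hi⟩
      · rw [if_neg h] at hi
        exact Or.inr ⟨(Finset.mem_union.1 hy).resolve_left h, i, hi⟩
    have hcard := (Finset.card_le_card hsplit).trans (Finset.card_union_le _ _)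
    have hcard' : (((Z' ∪ A').filter (fun y => ∃ i,
        w ∈ (if y ∈ Z' then Q' y else fun i => (Q y i \ Sat).erase v) i)).card : ℝ) ≤
        ((Z'.filter (fun y => ∃ i, w ∈ Q' y i)).card : ℝ) +
          ((A'.filter (fun y => ∃ i, w ∈ (Q y i \ Sat).erase v)).card : ℝ) := by
      exact_mod_cast hcard
    by_cases he : A'.filter (fun y => ∃ i, w ∈ (Q y i \ Sat).erase v) = ∅
    · rw [he] at hcard'
      simp only [Finset.card_empty, Nat.cast_zero, add_zero] at hcard'
      exact hcard'.trans (hs'.deg w)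
    · have hle : (A'.filter (fun y => ∃ i, w ∈ (Q y i \ Sat).erase v)).card ≤ 1 := by
        rw [Finset.card_le_one]
        intro y hy y' hy'
        obtain ⟨hy, i, hi⟩ := Finset.mem_filter.1 hy
        obtain ⟨hy', i', hi'⟩ := Finset.mem_filter.1 hy'
        rw [Finset.mem_erase, Finset.mem_sdiff] at hi hi'
        exact hs.linear y (hA hy) y' (hA hy') v w hi.1.symm ⟨j, hv y hy⟩ ⟨i, hi.2.1⟩
          ⟨j, hv y' hy'⟩ ⟨i', hi'.2.1⟩
      obtain ⟨y, hy⟩ := Finset.nonempty_iff_ne_empty.2 he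
      obtain ⟨hy, i, hi⟩ := Finset.mem_filter.1 hy
      rw [Finset.mem_erase, Finset.mem_sdiff] at hi
      have hwU : w ∈ U := hs.sub y (hA hy) i hi.2.1
      have hw : ((Z'.filter (fun y => ∃ i, w ∈ Q' y i)).card : ℝ) + 1 ≤ D' := by
        by_contra hcon
        exact hi.2.2 (hSat ▸ Finset.mem_filter.2 ⟨hwU, not_le.1 hcon⟩)
      have hle' : ((A'.filter (fun y => ∃ i, w ∈ (Q y i \ Sat).erase v)).card : ℝ) ≤ 1 := by
        exact_mod_cast hle
      linarith
  · intro y hy y' hy' v w hvw ⟨i1, h1⟩ ⟨i2, h2⟩ ⟨i3, h3⟩ ⟨i4, h4⟩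
    exact hs.linear y (hZA hy) y' (hZA hy') v w hvw ⟨i1, hsub y hy _ h1⟩ ⟨i2, hsub y hy _ h2⟩
      ⟨i3, hsub y' hy' _ h3⟩ ⟨i4, hsub y' hy' _ h4⟩

open Classical in
/-- One stage of the algorithm: at the cost of recording `N` points, the problem of avoiding
`t` in the system `(Z, Q)` is reduced to avoiding `t` with `t j` lowered by one in systems of
at least `z'` blocks with maximum degree `D'`. -/
theorem covered_stage {X Y ι : Type*} [Fintype ι] {U : Finset X} {b a D D' : ℝ}
    {Z : Finset Y} {Q : Y → ι → Finset X} {z z' e a₀ m : ℝ} {M N n' : ℕ}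
    (hs : IsBlockSystem U b a D Z Q)
    (hz : z ≤ Z.card) (hz0 : 0 < z) (hz' : z' ≤ z / 4)
    (hD : 0 < D) (hD' : 2 ≤ D') (he : 2 ≤ e) (hb : 0 ≤ b)
    (hbad : 16 * (z' * D) * (Fintype.card ι * b) ≤ z * D' * e)
    (ha : a₀ / 2 ≤ a) (ha0 : 0 < a₀) (hU : 0 < U.card)
    (t : ι → ℕ) (j : ι) (hj : 0 < t j) (hM : U.card + 1 ≤ M)
    (hN : z' ≤ N * (z * a₀ / (8 * U.card))) (hm : U.card - z * a₀ / (8 * D) ≤ m)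
    (next : ∀ (Z' : Finset Y) (Q' : Y → ι → Finset X), IsBlockSystem U b (a - e) D' Z' Q' →
      z' ≤ Z'.card → Covered M n' m (Avoids U Z' Q' (Function.update t j (t j - 1)))) :
    Covered M (N + n') m (Avoids U Z Q t) := by
  have key : ∀ (n : ℕ) (Z' : Finset Y) (Q' : Y → ι → Finset X), Z' ⊆ Z →
      (∀ y ∈ Z', ∀ i, Q' y i ⊆ Q y i) → IsBlockSystem U b (a - e) D' Z' Q' →
      z' ≤ Z'.card + n * (z * a₀ / (8 * U.card)) →
      Covered M (n + n') m (fun I => Avoids U Z Q t I ∧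
        Avoids U Z' Q' (Function.update t j (t j - 1)) I) := by
    intro n
    induction n with
    | zero =>
      intro Z' Q' _ _ hs' hc
      refine (next Z' Q' hs' (by simpa using hc)).mono (by omega) (by omega) le_rfl
        (fun I h => h.2)
    | succ n ih =>
      intro Z' Q' hZZ hQQ hs' hc
      by_cases hbig : z' ≤ Z'.card
      · exact (next Z' Q' hs' hbig).mono (by omega) (by omega) le_rfl (fun I h => h.2)
      set Sat := U.filter
        (fun w => D' < ((Z'.filter (fun y => ∃ i, w ∈ Q' y i)).card : ℝ) + 1) with hSat
      set A := Z.filter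
        (fun y => y ∉ Z' ∧ ∀ i, (((Q y i) ∩ Sat).card : ℝ) ≤ e - 1) with hA
      set V := U.filter
        (fun v => z * a₀ / (8 * U.card) ≤ ((A.filter (fun y => v ∈ Q y j)).card : ℝ)) with hV
      have hVc := many_heavy_points hs hs' hz hz0 hz' (not_le.1 hbig) hD hD' he hb hbad ha ha0
        hU j Sat hSat A hA V hV
      have hVU : V ⊆ U := Finset.filter_subset _ _
      rw [show n + 1 + n' = n + n' + 1 by ring]
      refine Covered.branch U V (fun I h => h.1.1)
        ((Nat.add_le_add_right (Finset.card_le_card hVU) 1).trans hM) ?_ ?_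
      · rw [Finset.cast_card_sdiff hVU]
        linarith
      · intro v hv
        -- the blocks newly hit by `v` are moved; `v` counts towards the `j`-th part of each
        set A' := A.filter (fun y => v ∈ Q y j) with hA'
        have hA'Z : A' ⊆ Z := (Finset.filter_subset _ _).trans (Finset.filter_subset _ _)
        have hA'n : ∀ y ∈ A', y ∉ Z' := fun y hy =>
          (Finset.mem_filter.1 (Finset.mem_filter.1 hy).1).2.1
        have hA'v : ∀ y ∈ A', v ∈ Q y j := fun y hy => (Finset.mem_filter.1 hy).2
        have hext := hs.extend hs' hZZ hQQ hSat hA'Z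
          (fun y hy => (Finset.mem_filter.1 (Finset.mem_filter.1 hy).1).2.2) hA'v
        refine (ih _ _ (Finset.union_subset hZZ hA'Z) ?_ hext ?_).mono (by omega) le_rfl le_rfl ?_
        · intro y hy i
          split_ifs with h
          · exact hQQ y h i
          · exact (Finset.erase_subset _ _).trans Finset.sdiff_subset
        · have hdisj : Disjoint Z' A' :=
            Finset.disjoint_right.2 fun y hy => hA'n y hy
          rw [Finset.card_union_of_disjoint hdisj]
          have := (Finset.mem_filter.1 hv).2
          push_cast at hc ⊢
          linarith
        · rintro I ⟨⟨hI, hI'⟩, hvI⟩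
          refine ⟨hI, hI.1, fun y hy => ?_⟩
          by_cases h : y ∈ Z'
          · simpa only [if_pos h] using hI'.2 y h
          · have hyA : y ∈ A' := (Finset.mem_union.1 hy).resolve_left h
            obtain ⟨i, hi⟩ := hI.2 y (hA'Z hyA)
            refine ⟨i, ?_⟩
            simp only [if_neg h]
            have hle : I ∩ (Q y i \ Sat).erase v ⊆ (I ∩ Q y i).erase v := by
              intro w hw
              simp only [Finset.mem_inter, Finset.mem_erase, Finset.mem_sdiff] at hw ⊢
              exact ⟨hw.2.1, hw.1, hw.2.2.1⟩
            have hle := Finset.card_le_card hle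
            by_cases hij : i = j
            · subst hij
              rw [Finset.card_erase_of_mem (Finset.mem_inter.2 ⟨hvI, hA'v y hyA⟩)] at hle
              rw [Function.update_self]
              have : 0 < (I ∩ Q y i).card :=
                Finset.card_pos.2 ⟨v, Finset.mem_inter.2 ⟨hvI, hA'v y hyA⟩⟩
              omega
            · rw [Function.update_of_ne hij]
              exact (hle.trans (Finset.card_erase_le)).trans_lt hi
  refine (key N ∅ Q (Finset.empty_subset _) (by simp) ?_ (by simpa using hN)).mono (by omega)
    le_rfl le_rfl (fun I h => ⟨h, h.1, by simp⟩)
  exact ⟨by simp, by simp, by simp, fun w => by simp; linarith, by simp⟩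

/-! ### All stages together -/

open Classical in
/-- Iterating `covered_stage`: each stage multiplies the degree bound by `ρ` and the number of
blocks by `c * ρ`, so the ratio of the two, which bounds the number of points removed
from `U`, drops only by the constant `c`. -/
theorem covered_of_blockSystem {X Y ι : Type*} [Fintype ι] {U : Finset X}
    {b e c ρ a₀ m : ℝ} {M N : ℕ} (hρ : 0 < ρ) (hρ1 : ρ ≤ 1) (hc : 0 < c) (hc4 : c ≤ 1 / 4)
    (he : 2 ≤ e) (ha0 : 0 < a₀) (hb : 0 ≤ b) (hcb : 16 * c * (Fintype.card ι * b) ≤ e)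
    (hU : 0 < U.card) (hM : U.card + 1 ≤ M) (hN : 8 * c * ρ * U.card ≤ N * a₀) (k : ℕ) :
    ∀ (D z a : ℝ) (t : ι → ℕ) (Z : Finset Y) (Q : Y → ι → Finset X), ∑ i, t i = k + 1 →
      IsBlockSystem U b a D Z Q → z ≤ Z.card → 0 < z → 0 < D → 2 ≤ D * ρ ^ k →
      a₀ / 2 + k * e ≤ a → U.card - c ^ k * z * a₀ / (8 * D) ≤ m →
      Covered M (k * N) m (Avoids U Z Q t) := by
  induction k with
  | zero =>
    -- a single required point, in part `j`: `I` misses all the `j`-th parts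
    intro D z a t Z Q ht hs hz hz0 hD _ ha hm
    have hj : ∃ j, t j ≠ 0 := by
      by_contra h
      push Not at h
      simp [h] at ht
    obtain ⟨j, hj⟩ := hj
    have ht0 : ∀ i, i ≠ j → t i = 0 := by
      intro i hi
      have h1 := Finset.add_sum_erase Finset.univ t (Finset.mem_univ j)
      have h2 := Finset.single_le_sum (f := t) (fun _ _ => Nat.zero_le _)
        (Finset.mem_erase.2 ⟨hi, Finset.mem_univ i⟩)
      omega
    have ht1 : t j ≤ 1 := by
      have := Finset.single_le_sum (f := t) (fun _ _ => Nat.zero_le _) (Finset.mem_univ j)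
      omega
    set V := Z.biUnion (fun y => Q y j) with hV
    have hVU : V ⊆ U := by
      intro v hv
      obtain ⟨y, hy, hv⟩ := Finset.mem_biUnion.1 hv
      exact hs.sub y hy j hv
    have hVc := card_mul_le_card_mul_real Z V (fun y v => v ∈ Q y j) a D (by
      intro y hy
      have : Q y j ⊆ V.filter (fun v => v ∈ Q y j) := fun v hv =>
        Finset.mem_filter.2 ⟨Finset.mem_biUnion.2 ⟨y, hy, hv⟩, hv⟩
      refine (hs.lower y hy j).trans ?_
      exact_mod_cast Finset.card_le_card this) (by
      intro v _
      refine le_trans ?_ (hs.deg v)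
      have : Z.filter (fun y => v ∈ Q y j) ⊆ Z.filter (fun y => ∃ i, v ∈ Q y i) := by
        intro y hy
        rw [Finset.mem_filter] at hy ⊢
        exact ⟨hy.1, j, hy.2⟩
      exact_mod_cast Finset.card_le_card this)
    refine ⟨{U \ V}, by simp, ?_, ?_⟩
    · intro R hR
      rw [Finset.mem_singleton.1 hR, Finset.cast_card_sdiff hVU]
      have : z * a₀ / (8 * D) ≤ V.card := by
        rw [div_le_iff₀ (by positivity)]
        simp only [Nat.cast_zero, zero_mul, add_zero] at ha
        have : z * (a₀ / 2) ≤ Z.card * a := by gcongr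
        nlinarith
      simp only [pow_zero, one_mul] at hm
      linarith
    · intro I hI
      refine ⟨_, Finset.mem_singleton_self _, fun x hx => Finset.mem_sdiff.2 ⟨hI.1 hx, ?_⟩⟩
      intro hxV
      obtain ⟨y, hy, hxy⟩ := Finset.mem_biUnion.1 hxV
      obtain ⟨i, hi⟩ := hI.2 y hy
      by_cases hij : i = j
      · subst hij
        have : 0 < (I ∩ Q y i).card := Finset.card_pos.2 ⟨x, Finset.mem_inter.2 ⟨hx, hxy⟩⟩
        omega
      · rw [ht0 i hij] at hi
        omega
  | succ k ih =>
    intro D z a t Z Q ht hs hz hz0 hD hDρ ha hm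
    have hj : ∃ j, t j ≠ 0 := by
      by_contra h
      push Not at h
      simp [h] at ht
    obtain ⟨j, hj⟩ := hj
    have hρk : ρ ^ k ≤ 1 := pow_le_one₀ hρ.le hρ1
    have hck : c ^ (k + 1) ≤ 1 := pow_le_one₀ hc.le (by linarith)
    have hρD : 0 < ρ * D := by positivity
    have hD2 : 2 ≤ ρ * D := by
      rw [pow_succ] at hDρ
      nlinarith
    have hU' : (0 : ℝ) < U.card := by exact_mod_cast hU
    rw [show (k + 1) * N = N + k * N by ring]
    refine covered_stage (z' := c * ρ * z) (D' := ρ * D) (e := e) (a₀ := a₀) hs hz hz0 ?_ hD hD2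
      he hb ?_ ?_ ha0 hU t j (Nat.pos_of_ne_zero hj) hM ?_ ?_ ?_
    · have : c * ρ ≤ 1 / 4 := by nlinarith
      nlinarith
    · have : 0 ≤ z * D * ρ := by positivity
      nlinarith [mul_le_mul_of_nonneg_left hcb this]
    · push_cast at ha
      nlinarith [Nat.cast_nonneg (α := ℝ) k]
    · rw [mul_div_assoc', le_div_iff₀ (by positivity)]
      nlinarith
    · refine le_trans ?_ hm
      have : c ^ (k + 1) * z * a₀ / (8 * D) ≤ z * a₀ / (8 * D) := by
        gcongr
        nlinarith
      linarith
    · intro Z' Q' hs' hz'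
      refine ih (ρ * D) (c * ρ * z) (a - e) _ Z' Q' ?_ hs' hz' (by positivity) hρD ?_ ?_ ?_
      · have h1 := Finset.sum_update_of_mem (Finset.mem_univ j) t (t j - 1)
        have h2 := Finset.add_sum_erase Finset.univ t (Finset.mem_univ j)
        rw [Finset.sdiff_singleton_eq_erase] at h1
        omega
      · calc (2 : ℝ) ≤ D * ρ ^ (k + 1) := hDρ
          _ = _ := by ring
      · push_cast at ha
        linarith
      · refine le_trans (le_of_eq ?_) hm
        congr 1
        field_simp
        ring

/-! ### Iterated shrinking of the containers -/

/-- Iterating a cover that shrinks every large set `U` by the factor `1 - x`. -/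
theorem covered_iterate {X : Type*} {P : Finset X → Prop} {M n : ℕ} {m₀ x : ℝ} (hM : 0 < M)
    (step : ∀ U : Finset X, m₀ < U.card →
      Covered M n (U.card * (1 - x)) (fun I => P I ∧ I ⊆ U)) (j : ℕ) :
    ∀ U : Finset X, (U.card : ℝ) ≤ m₀ * Real.exp (j * x) →
      Covered M (j * n) m₀ (fun I => P I ∧ I ⊆ U) := by
  classical
  induction j with
  | zero =>
    intro U hU
    refine ⟨{U}, by simp, ?_, fun I hI => ⟨U, by simp, hI.2⟩⟩
    simpa using hU
  | succ j ih =>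
    intro U hU
    by_cases hbig : m₀ < U.card
    · rw [show (j + 1) * n = n + j * n by ring]
      refine (step U hbig).comp fun R hR => (ih R ?_).mono hM le_rfl le_rfl
        fun I hI => ⟨hI.1.1, hI.2⟩
      calc (R.card : ℝ) ≤ U.card * (1 - x) := hR
        _ ≤ U.card * Real.exp (-x) := by
          gcongr
          linarith [Real.add_one_le_exp (-x)]
        _ ≤ m₀ * Real.exp ((j + 1 : ℕ) * x) * Real.exp (-x) := by gcongr
        _ = m₀ * Real.exp (j * x) := by
          rw [mul_assoc, ← Real.exp_add]
          congr 2
          push_cast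
          ring
    · refine ⟨{U}, by simpa using Nat.one_le_pow _ _ hM, ?_, fun I hI => ⟨U, by simp, hI.2⟩⟩
      simpa using hbig

/-! ### The blocks given by the neighbourhoods -/

open Classical in
/-- `I` meets, for every `y`, some part of the neighbourhood of `y` in fewer than `sz i` points.
Every `I` for which `H[I]` has no copy of the complete multipartite graph has this property,
and nothing else about `I` matters for the containers. -/
def MissesBlocks {X Y : Type*} {r : ℕ} (E : X → Y → Prop) (part : Y → X → Fin r)
    (sz : Fin r → ℕ) (I : Finset X) : Prop :=
  ∀ y, ∃ i, (I.filter (fun x => E x y ∧ part y x = i)).card < sz i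

theorem missesBlocks_of_not_containsCopy {X Y : Type*} {r : ℕ} {E : X → Y → Prop}
    {part : Y → X → Fin r} {sz : Fin r → ℕ} {H : SimpleGraph X}
    (hH : ∀ x₁ x₂, H.Adj x₁ x₂ ↔ ∃ (y : Y) (i j : Fin r), i ≠ j ∧
          (E x₁ y ∧ part y x₁ = i) ∧ (E x₂ y ∧ part y x₂ = j)) {I : Finset X}
    (hI : ¬ ContainsCopy (SimpleGraph.completeMultipartiteGraph fun i => Fin (sz i))
                (H.induce (I : Set X))) : MissesBlocks E part sz I := by
  classical
  intro y
  by_contra hcon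
  push Not at hcon
  have hemb : ∀ i, Nonempty (Fin (sz i) ↪ {x // x ∈ I.filter (fun x => E x y ∧ part y x = i)}) := by
    intro i
    apply Function.Embedding.nonempty_of_card_le
    rw [Fintype.card_fin, Fintype.card_coe]
    convert hcon i
  have g := fun i => (hemb i).some
  have hg : ∀ i k, ((g i k : X) ∈ I ∧ E (g i k : X) y ∧ part y (g i k : X) = i) := by
    intro i k
    have := Finset.mem_filter.1 (g i k).2
    exact this
  refine hI ⟨fun p => ⟨(g p.1 p.2 : X), (hg p.1 p.2).1⟩, ?_, ?_⟩
  · rintro ⟨i, k⟩ ⟨j, l⟩ h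
    have h' : (g i k : X) = (g j l : X) := congrArg Subtype.val h
    have hij : i = j := by rw [← (hg i k).2.2, h', (hg j l).2.2]
    subst hij
    rw [(g i).injective (Subtype.ext h')]
  · rintro ⟨i, k⟩ ⟨j, l⟩ h
    rw [SimpleGraph.comap_adj]
    exact (hH _ _).2 ⟨y, i, j, h, (hg i k).2, (hg j l).2⟩

open Classical in
/-- A large set `U` loses a `κ / log q` fraction at the cost of `O(q ^ (2 - 1 / (s - 1)))` recorded
points. Shrinking the degree bound by `ρ = q ^ (-1 / (s - 1))` in each of the `s - 1` stages brings
it from `2 q` down to exactly `2`. -/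
theorem covered_shrink {X Y : Type*} [Fintype Y] {r : ℕ} (hr : 2 ≤ r) (sz : Fin r → ℕ)
    (hs : r ≤ ∑ i, sz i) {q : ℕ} (hq : 2 ≤ q) (E : X → Y → Prop) (part : Y → X → Fin r)
    (hdeg : ∀ x : X, Set.ncard {y : Y | E x y} = q + 1)
    (hC4 : ∀ x₁ x₂ y₁ y₂, x₁ ≠ x₂ → y₁ ≠ y₂ →
          E x₁ y₁ → E x₁ y₂ → E x₂ y₁ → E x₂ y₂ → False)
    (U : Finset X) (hU : 500 * ((∑ i, sz i : ℕ) : ℝ) ^ 2 * (q : ℝ) ^ 2 < U.card)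
    (γ : ℝ) (hγ : (U.card : ℝ) / (q : ℝ) ^ 2 ≤ γ)
    (hgood : (U.card : ℝ) * q / (8 * γ * Real.logb 2 q) ≤
              (Set.ncard {y : Y | ∀ i : Fin r,
                γ / (10 * r) ≤ (Set.ncard {x : X | x ∈ U ∧ E x y ∧ part y x = i} : ℝ) ∧
                (Set.ncard {x : X | x ∈ U ∧ E x y ∧ part y x = i} : ℝ) ≤ γ} : ℝ))
    {c : ℝ} (hc : c = 1 / (320 * (r : ℝ) ^ 2 * (∑ i, sz i : ℕ)))
    {M N : ℕ} (hM : U.card + 1 ≤ M)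
    (hN : (q : ℝ) ^ (2 - 1 / ((∑ i, sz i : ℕ) - 1 : ℝ)) ≤ N) :
    Covered M (((∑ i, sz i) - 1) * N)
      (U.card * (1 - c ^ ((∑ i, sz i) - 1) / (1280 * r) / Real.logb 2 q))
      (fun I => MissesBlocks E part sz I ∧ I ⊆ U) := by
  generalize hsd : ∑ i, sz i = s at *
  have hs2 : 2 ≤ s := hr.trans hs
  have hs2' : (2 : ℝ) ≤ s := by exact_mod_cast hs2
  have hr2' : (2 : ℝ) ≤ r := by exact_mod_cast hr
  have hrs : (r : ℝ) ≤ s := by exact_mod_cast hs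
  have hq2 : (2 : ℝ) ≤ q := by exact_mod_cast hq
  have hq0 : (0 : ℝ) < q := by linarith
  have hU0 : (0 : ℝ) < U.card := lt_of_le_of_lt (by positivity) hU
  have hγs : 500 * (s : ℝ) ^ 2 ≤ γ := by
    refine le_trans ?_ hγ
    rw [le_div_iff₀ (by positivity)]
    exact hU.le
  have hγ0 : 0 < γ := lt_of_lt_of_le (by positivity) hγs
  have hlg : 0 < Real.logb 2 q := Real.logb_pos (by norm_num) (by linarith)
  have hc0 : 0 < c := by rw [hc]; positivity
  have hs1 : ((s - 1 : ℕ) : ℝ) = (s : ℝ) - 1 := by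
    rw [Nat.cast_sub (by omega)]
    simp
  have hs1' : (0 : ℝ) < (s : ℝ) - 1 := by linarith
  set ρ : ℝ := (q : ℝ) ^ (-(1 / ((s : ℝ) - 1))) with hρ
  have hρ0 : 0 < ρ := Real.rpow_pos_of_pos hq0 _
  have hρ1 : ρ ≤ 1 := Real.rpow_le_one_of_one_le_of_nonpos (by linarith)
    (by rw [neg_nonpos]; positivity)
  have hρpow : ρ ^ (s - 1) = (q : ℝ)⁻¹ := by
    rw [hρ, ← Real.rpow_natCast, ← Real.rpow_mul hq0.le, hs1]
    rw [show -(1 / ((s : ℝ) - 1)) * ((s : ℝ) - 1) = -1 by field_simp]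
    rw [Real.rpow_neg_one]
  have hL : ρ * (q : ℝ) ^ 2 ≤ N := by
    refine le_trans (le_of_eq ?_) hN
    rw [hρ, ← Real.rpow_natCast, ← Real.rpow_add hq0]
    congr 1
    push_cast
    ring
  set Q : Y → Fin r → Finset X := fun y i => U.filter (fun x => E x y ∧ part y x = i) with hQ
  have hQn : ∀ y i, Set.ncard {x : X | x ∈ U ∧ E x y ∧ part y x = i} = (Q y i).card := by
    intro y i
    rw [← Set.ncard_coe_finset]
    congr 1
    ext x
    simp [hQ]
  simp only [hQn] at hgood
  set Z : Finset Y := Finset.univ.filter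
    (fun y => ∀ i, γ / (10 * r) ≤ ((Q y i).card : ℝ) ∧ ((Q y i).card : ℝ) ≤ γ) with hZ
  have hZn : Set.ncard {y : Y | ∀ i, γ / (10 * r) ≤ ((Q y i).card : ℝ) ∧
      ((Q y i).card : ℝ) ≤ γ} = Z.card := by
    rw [← Set.ncard_coe_finset]
    congr 1
    ext y
    simp [hZ]
  rw [hZn] at hgood
  have hQE : ∀ y x, (∃ i, x ∈ Q y i) → E x y := by
    rintro y x ⟨i, hi⟩
    exact (Finset.mem_filter.1 hi).2.1
  have hsys : IsBlockSystem U γ (γ / (10 * r)) (2 * q) Z Q := by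
    refine ⟨fun y _ i => Finset.filter_subset _ _, fun y hy i => ((Finset.mem_filter.1 hy).2 i).2,
      fun y hy i => ((Finset.mem_filter.1 hy).2 i).1, ?_, ?_⟩
    · intro w
      have h1 : ((Z.filter (fun y => ∃ i, w ∈ Q y i) : Finset Y) : Set Y) ⊆ {y | E w y} := by
        intro y hy
        exact hQE y w (Finset.mem_filter.1 hy).2
      have h2 := Set.ncard_le_ncard h1 (Set.toFinite _)
      rw [Set.ncard_coe_finset, hdeg w] at h2
      have h3 : ((Z.filter (fun y => ∃ i, w ∈ Q y i)).card : ℝ) ≤ q + 1 := by exact_mod_cast h2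
      refine le_trans ?_ (by linarith : (q : ℝ) + 1 ≤ 2 * q)
      refine le_trans (le_of_eq ?_) h3
      congr!
    · intro y _ y' _ v w hvw h1 h2 h3 h4
      by_contra hne
      exact hC4 v w y y' hvw hne (hQE _ _ h1) (hQE _ _ h3) (hQE _ _ h2) (hQE _ _ h4)
  have ha0 : 0 < γ / (10 * r) := by positivity
  -- parts have size at least `a₀ = γ / (10 r)` and may lose `e = a₀ / (2 s)` points per stage, so
  -- they keep more than `a₀ / 2` points; `e ≥ 2` uses `|U| > 500 s² q²`
  have hmain := covered_of_blockSystem (U := U) (b := γ) (e := γ / (10 * r) / (2 * s)) (c := c)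
    (ρ := ρ) (a₀ := γ / (10 * r))
    (m := U.card * (1 - c ^ (s - 1) / (1280 * r) / Real.logb 2 q)) (M := M) (N := N)
    hρ0 hρ1 hc0 ?_ ?_ ha0 hγ0.le ?_ (by exact_mod_cast hU0) hM ?_ (s - 1)
    (2 * q) (U.card * q / (8 * γ * Real.logb 2 q)) (γ / (10 * r)) sz Z Q (by omega) hsys hgood
    (by positivity) (by positivity) ?_ ?_ ?_
  · refine hmain.mono (by omega) le_rfl le_rfl fun I hI => ⟨hI.2, fun y _ => ?_⟩
    obtain ⟨i, hi⟩ := hI.1 y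
    refine ⟨i, lt_of_le_of_lt (Finset.card_le_card ?_) hi⟩
    intro x hx
    rw [Finset.mem_inter] at hx
    exact Finset.mem_filter.2 ⟨hx.1, (Finset.mem_filter.1 hx.2).2⟩
  · rw [hc]
    refine one_div_le_one_div_of_le (by norm_num) ?_
    nlinarith [mul_le_mul hr2' hr2' (by norm_num) (by linarith)]
  · rw [div_div, le_div_iff₀ (by positivity)]
    nlinarith [mul_le_mul_of_nonneg_right hrs (show (0 : ℝ) ≤ s by linarith)]
  · rw [hc, Fintype.card_fin]
    apply le_of_eq
    field_simp
    norm_num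
  · have hγ' : (U.card : ℝ) ≤ γ * (q : ℝ) ^ 2 := by
      rwa [div_le_iff₀ (by positivity)] at hγ
    have h80 : 80 * r * c ≤ 1 := by
      rw [hc, mul_one_div, div_le_one (by positivity)]
      nlinarith [mul_le_mul hr2' hr2' (by norm_num) (by linarith), sq_nonneg (r : ℝ)]
    calc 8 * c * ρ * U.card ≤ 8 * c * ρ * (γ * (q : ℝ) ^ 2) := by gcongr
      _ = (80 * r * c) * (ρ * (q : ℝ) ^ 2) * (γ / (10 * r)) := by field_simp; ring
      _ ≤ 1 * N * (γ / (10 * r)) := by gcongr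
      _ = _ := by ring
  · rw [hρpow]
    apply le_of_eq
    field_simp
  · rw [hs1]
    have : γ / (10 * r) / 2 + ((s : ℝ) - 1) * (γ / (10 * r) / (2 * s)) =
        γ / (10 * r) - γ / (10 * r) / (2 * s) := by field_simp; ring
    rw [this]
    have : 0 < γ / (10 * r) / (2 * s) := by positivity
    linarith
  · apply le_of_eq
    field_simp
    ring

theorem stmt16 (r : ℕ) (hr : 2 ≤ r) (sz : Fin r → ℕ) (hsz : ∀ i, 0 < sz i) :
    ∃ C' : ℝ, 0 < C' ∧ ∃ q₀ : ℕ, ∀ q : ℕ, Nat.Prime q → q₀ ≤ q →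
      ∀ (X Y : Type) [Fintype X] [Fintype Y] [DecidableEq X],
        ∀ (E : X → Y → Prop) (part : Y → X → Fin r) (H : SimpleGraph X),
        -- sizes of the two sides of the bipartite graph `F`:
        Fintype.card X = q ^ 4 - q ^ 3 + q ^ 2 →
        Fintype.card Y = q ^ 3 + 1 →
        -- degrees in `F`:
        (∀ x : X, Set.ncard {y : Y | E x y} = q + 1) →
        (∀ y : Y, Set.ncard {x : X | E x y} = q ^ 2) →
        -- `F` is `C₄`-free:
        (∀ x₁ x₂ y₁ y₂, x₁ ≠ x₂ → y₁ ≠ y₂ →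
          E x₁ y₁ → E x₁ y₂ → E x₂ y₁ → E x₂ y₂ → False) →
        -- `F` contains no subdivision of `K₄` with branch vertices in `X`:
        (¬ ∃ (x : Fin 4 → X) (y : Fin 4 → Fin 4 → Y),
          Function.Injective x ∧
          (∀ i j, i < j → E (x i) (y i j) ∧ E (x j) (y i j)) ∧
          (∀ i j k l, i < j → k < l → (i, j) ≠ (k, l) → y i j ≠ y k l)) →
        -- `H` is the graph on `X` obtained by embedding, for each `y`, a complete
        -- `r`-partite graph on the parts `S i y = {x | E x y ∧ part y x = i}`:
        (∀ x₁ x₂, H.Adj x₁ x₂ ↔ ∃ (y : Y) (i j : Fin r), i ≠ j ∧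
          (E x₁ y ∧ part y x₁ = i) ∧ (E x₂ y ∧ part y x₂ = j)) →
        -- `H` is good:
        (∀ U : Finset X, 500 * r ^ 2 * q ^ 2 ≤ U.card →
          ∃ γ : ℝ, (U.card : ℝ) / (q : ℝ) ^ 2 ≤ γ ∧
            (U.card : ℝ) * q / (8 * γ * Real.logb 2 q) ≤
              (Set.ncard {y : Y | ∀ i : Fin r,
                γ / (10 * r) ≤ (Set.ncard {x : X | x ∈ U ∧ E x y ∧ part y x = i} : ℝ) ∧
                (Set.ncard {x : X | x ∈ U ∧ E x y ∧ part y x = i} : ℝ) ≤ γ} : ℝ)) →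
        ∃ 𝒞 : Finset (Finset X),
          (𝒞.card : ℝ) ≤ (q : ℝ) ^
              (C' * (q : ℝ) ^ (2 - 1 / ((∑ i, sz i : ℕ) - 1 : ℝ)) *
                Real.logb 2 (q : ℝ) ^ 2) ∧
          (∀ R ∈ 𝒞, R.card ≤ 500 * (∑ i, sz i) ^ 2 * q ^ 2) ∧
          ∀ I : Finset X,
            ¬ ContainsCopy (SimpleGraph.completeMultipartiteGraph fun i => Fin (sz i))
                (H.induce (I : Set X)) →
            ∃ R ∈ 𝒞, I ⊆ R := by
  classical
  have hs : r ≤ ∑ i, sz i := by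
    have := Finset.card_nsmul_le_sum Finset.univ sz 1 (fun i _ => hsz i)
    simpa using this
  have hs2 : 2 ≤ ∑ i, sz i := hr.trans hs
  set s := ∑ i, sz i with hsd
  set c : ℝ := 1 / (320 * (r : ℝ) ^ 2 * s) with hc
  have hr0 : (0 : ℝ) < r := by exact_mod_cast (by omega : 0 < r)
  have hs2' : (2 : ℝ) ≤ s := by exact_mod_cast hs2
  have hc0 : 0 < c := by positivity
  set κ : ℝ := c ^ (s - 1) / (1280 * r) with hκ
  have hκ0 : 0 < κ := by positivity
  have hs1 : ((s - 1 : ℕ) : ℝ) = (s : ℝ) - 1 := by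
    rw [Nat.cast_sub (by omega)]
    simp
  have hs1' : (0 : ℝ) < (s : ℝ) - 1 := by linarith
  refine ⟨8 * ((s : ℝ) - 1) * (2 / κ + 1), by positivity, 2, ?_⟩
  intro q _ hq X Y _ _ _ E part H hX _ hdeg _ hC4 _ hH hgood
  have hq2 : (2 : ℝ) ≤ q := by exact_mod_cast hq
  have hq0 : (0 : ℝ) < q := by linarith
  set lg := Real.logb 2 (q : ℝ) with hlgd
  have hlg1 : 1 ≤ lg := by
    rw [hlgd, Real.le_logb_iff_rpow_le (by norm_num) hq0]
    simpa using hq2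
  have hln : Real.log q ≤ lg := by
    rw [hlgd, Real.logb, le_div_iff₀ (Real.log_pos (by norm_num))]
    have h1 : Real.log 2 ≤ 1 := by linarith [Real.log_two_lt_d9]
    have h2 : 0 ≤ Real.log q := Real.log_nonneg (by linarith)
    nlinarith
  set L : ℝ := (q : ℝ) ^ (2 - 1 / ((s : ℝ) - 1)) with hLd
  have hL1 : 1 ≤ L := by
    refine Real.one_le_rpow (by linarith) ?_
    have : 1 / ((s : ℝ) - 1) ≤ 1 := by
      rw [div_le_one hs1']
      linarith
    linarith
  set N := ⌈L⌉₊ with hNd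
  have hN2 : (N : ℝ) ≤ 2 * L := by
    have := Nat.ceil_lt_add_one (show 0 ≤ L by linarith)
    linarith
  set M := Fintype.card X + 1 with hMd
  have hM4 : M ≤ q ^ 4 := by
    rw [hMd, hX]
    have h1 : q ^ 2 + 1 ≤ q ^ 3 := by nlinarith [Nat.pow_le_pow_left hq 2]
    have h2 : q ^ 3 ≤ q ^ 4 := Nat.pow_le_pow_right (by omega) (by omega)
    omega
  set j := ⌈2 * lg ^ 2 / κ⌉₊ with hjd
  have hj2 : (j : ℝ) ≤ (2 / κ + 1) * lg ^ 2 := by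
    have h1 := Nat.ceil_lt_add_one (show 0 ≤ 2 * lg ^ 2 / κ by positivity)
    have h2 : (2 / κ + 1) * lg ^ 2 = 2 * lg ^ 2 / κ + lg ^ 2 := by ring
    nlinarith
  have hcov := covered_iterate (P := MissesBlocks E part sz) (M := M) (n := (s - 1) * N)
    (m₀ := 500 * (s : ℝ) ^ 2 * (q : ℝ) ^ 2) (x := κ / lg) (by omega) (by
      intro U hU
      obtain ⟨γ, hγ, hg⟩ := hgood U (by
        have h1 : 500 * s ^ 2 * q ^ 2 < U.card := by exact_mod_cast hU
        have h2 : 500 * r ^ 2 * q ^ 2 ≤ 500 * s ^ 2 * q ^ 2 := by gcongr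
        omega)
      exact covered_shrink hr sz hs hq E part hdeg hC4 U hU γ hγ hg hc
        (Nat.add_le_add_right (Finset.card_le_univ U) 1) (Nat.le_ceil L))
    j Finset.univ (by
      -- `exp (j κ / log₂ q) ≥ q ^ 2`, and `|X| ≤ q ^ 4`
      have h1 : (q : ℝ) ^ 2 ≤ Real.exp (j * (κ / lg)) := by
        rw [← Real.log_le_iff_le_exp (by positivity), Real.log_pow]
        have h2 : 2 * lg ^ 2 / κ ≤ j := Nat.le_ceil _
        rw [div_le_iff₀ hκ0] at h2
        rw [mul_div_assoc', le_div_iff₀ (by linarith)]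
        push_cast
        nlinarith
      have h3 : (Fintype.card X : ℝ) ≤ (q : ℝ) ^ 4 := by exact_mod_cast (by omega)
      have h4 : (1 : ℝ) ≤ 500 * (s : ℝ) ^ 2 := by nlinarith
      rw [Finset.card_univ]
      calc (Fintype.card X : ℝ) ≤ (q : ℝ) ^ 4 := h3
        _ = 1 * (q : ℝ) ^ 2 * (q : ℝ) ^ 2 := by ring
        _ ≤ _ := by gcongr)
  obtain ⟨C, hC1, hC2, hC3⟩ := hcov
  refine ⟨C, ?_, ?_, ?_⟩
  · have h1 : (C.card : ℝ) ≤ ((q : ℝ) ^ 4) ^ (j * ((s - 1) * N)) := by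
      exact_mod_cast hC1.trans (Nat.pow_le_pow_left hM4 _)
    refine h1.trans ?_
    rw [← pow_mul, ← Real.rpow_natCast]
    refine Real.rpow_le_rpow_of_exponent_le (by linarith) ?_
    push_cast
    rw [hs1]
    calc 4 * ((j : ℝ) * (((s : ℝ) - 1) * N))
        ≤ 4 * (((2 / κ + 1) * lg ^ 2) * (((s : ℝ) - 1) * (2 * L))) := by gcongr
      _ = _ := by ring
  · intro R hR
    exact_mod_cast hC2 R hR
  · intro I hI
    exact hC3 I ⟨missesBlocks_of_not_containsCopy hH hI, Finset.subset_univ I⟩
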